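/- arXiv:math/0601518 — 3 statements merged into one kernel-verified Lean document; each statement's English description precedes it below -/
import Mathlib

section
/- For every q ∈ Q with q ≠ 0 and every δ ∈ ℝ, one has α(D;n,δ) − α(D−q;n,δ) = |q|·(R(q) − δ). In particular, for fixed q ≠ 0 the map δ ↦ α(D;n,δ) − α(D−q;n,δ) is an affine function of δ with slope −|q| which vanishes exactly at δ = R(q). -/
/-!
Carrying out the double sum in the Casimir eigenvalue, using `∑ⱼ (m - j) = m (m - 1) / 2`, gives
the closed form
`α(e) = m (n - δ)(n + 1 - δ) / 2 + (n + 1 - δ) |e| + (|e|² + ∑ eᵢ² - 2 ∑ i eᵢ) / (2 (m + 1))`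
(`casimirEigenvalue_eq`), in which the terms quadratic in `δ` do not depend on `e`.
Since `q i ≤ d i` on the index range, `D - q` involves no truncated subtraction, and subtracting
the closed forms for `D` and `D - q` leaves `|q| (R(q) - δ)`. As `|q| ≠ 0`, this vanishes exactly
at `δ = R(q)`.
-/

open Finset

/-- The eigenvalue by which the Casimir operator of the projective algebra
`sl(m+1,ℝ)` acts on sections of the bundle associated to the irreducible
`GL(m,ℝ)`-representation characterized by the Young diagram `e` (indexed by
`1, …, m`), the integer `n` and the weight `δ`. -/
noncomputable def casimirEigenvalue (m : ℕ) (n : ℤ) (e : ℕ → ℕ) (δ : ℝ) : ℝ :=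
  ((m * ((n : ℝ) - δ) + ∑ i ∈ Finset.Icc 1 m, (e i : ℝ)) *
      (m * ((n : ℝ) + 1 - δ) + ∑ i ∈ Finset.Icc 1 m, (e i : ℝ))) / (2 * m) +
    (1 / (2 * m * (m + 1))) *
      ∑ i ∈ Finset.Icc 1 m, ∑ j ∈ Finset.Icc 1 m,
        ((e i : ℝ) * (e j : ℝ) * (m * (if i = j then (1 : ℝ) else 0) - 1) +
          2 * (e i : ℝ) * ((m : ℝ) - (j : ℝ)) * (m * (if i = j then (1 : ℝ) else 0) - 1))

/-- The resonance value `R(q)` attached to a nonzero label `q` of the branching law,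
for the Young diagram `d` (of depth at most `m-1`) and the integer `n`. -/
noncomputable def resonance (m : ℕ) (n : ℤ) (d q : ℕ → ℕ) : ℝ :=
  ((∑ i ∈ Finset.Icc 1 m, (q i : ℝ)) *
      (2 * ((m : ℝ) + 1) * ((n : ℝ) + 1) + 2 * (∑ i ∈ Finset.Icc 1 (m - 1), (d i : ℝ)) -
        ∑ i ∈ Finset.Icc 1 m, (q i : ℝ)) +
    ∑ i ∈ Finset.Icc 1 m,
      (2 * (d i : ℝ) * (q i : ℝ) - (q i : ℝ) ^ 2 - 2 * (i : ℝ) * (q i : ℝ))) /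
    (2 * (∑ i ∈ Finset.Icc 1 m, (q i : ℝ)) * ((m : ℝ) + 1))

lemma sum_Icc_sub_index (m : ℕ) :
    ∑ j ∈ Finset.Icc 1 m, ((m : ℝ) - (j : ℝ)) = m * (m - 1) / 2 := by
  have h : ∀ k : ℕ, ∑ j ∈ Finset.Icc 1 k, (j : ℝ) = k * (k + 1) / 2 := by
    intro k
    induction k with
    | zero => simp
    | succ k ih =>
      rw [Finset.sum_Icc_succ_top (by omega), ih]
      push_cast
      ring
  rw [Finset.sum_sub_distrib, h]
  simp
  ring

/-- The double sum in the eigenvalue: the diagonal part of `m δᵢⱼ - 1` yields single sums, and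
the constant part yields products of single sums. -/
lemma casimir_double_sum (m : ℕ) (e : ℕ → ℝ) :
    ∑ i ∈ Finset.Icc 1 m, ∑ j ∈ Finset.Icc 1 m,
        (e i * e j * (m * (if i = j then (1 : ℝ) else 0) - 1) +
          2 * e i * ((m : ℝ) - (j : ℝ)) * (m * (if i = j then (1 : ℝ) else 0) - 1)) =
      m * (∑ i ∈ Finset.Icc 1 m, e i ^ 2) - (∑ i ∈ Finset.Icc 1 m, e i) ^ 2 +
        m * (m + 1) * (∑ i ∈ Finset.Icc 1 m, e i) -
        2 * m * ∑ i ∈ Finset.Icc 1 m, (i : ℝ) * e i := by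
  have inner : ∀ i ∈ Finset.Icc 1 m, ∑ j ∈ Finset.Icc 1 m,
        (e i * e j * (m * (if i = j then (1 : ℝ) else 0) - 1) +
          2 * e i * ((m : ℝ) - (j : ℝ)) * (m * (if i = j then (1 : ℝ) else 0) - 1)) =
      m * e i ^ 2 - (∑ j ∈ Finset.Icc 1 m, e j) * e i + m * (m + 1) * e i -
        2 * m * ((i : ℝ) * e i) := by
    intro i hi
    have split : ∀ j ∈ Finset.Icc 1 m,
        (e i * e j * (m * (if i = j then (1 : ℝ) else 0) - 1) +
          2 * e i * ((m : ℝ) - (j : ℝ)) * (m * (if i = j then (1 : ℝ) else 0) - 1)) =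
        (if i = j then m * (e i * e j + 2 * e i * ((m : ℝ) - (j : ℝ))) else 0) -
          (e i * e j + 2 * e i * ((m : ℝ) - (j : ℝ))) := by
      intro j _
      split_ifs <;> ring
    rw [Finset.sum_congr rfl split, Finset.sum_sub_distrib, Finset.sum_ite_eq, if_pos hi,
      Finset.sum_add_distrib, ← Finset.mul_sum, ← Finset.mul_sum, sum_Icc_sub_index]
    ring
  rw [Finset.sum_congr rfl inner, Finset.sum_sub_distrib, Finset.sum_add_distrib,
    Finset.sum_sub_distrib, ← Finset.mul_sum, ← Finset.mul_sum, ← Finset.mul_sum,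
    ← Finset.mul_sum]
  ring

lemma casimirEigenvalue_eq (m : ℕ) (hm : m ≠ 0) (n : ℤ) (e : ℕ → ℕ) (δ : ℝ) :
    casimirEigenvalue m n e δ =
      m * ((n : ℝ) - δ) * ((n : ℝ) + 1 - δ) / 2 +
        ((n : ℝ) + 1 - δ) * (∑ i ∈ Finset.Icc 1 m, (e i : ℝ)) +
        ((∑ i ∈ Finset.Icc 1 m, (e i : ℝ)) ^ 2 + ∑ i ∈ Finset.Icc 1 m, (e i : ℝ) ^ 2 -
          2 * ∑ i ∈ Finset.Icc 1 m, (i : ℝ) * (e i : ℝ)) / (2 * ((m : ℝ) + 1)) := by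
  have hm0 : (m : ℝ) ≠ 0 := by exact_mod_cast hm
  have hm1 : (m : ℝ) + 1 ≠ 0 := by positivity
  rw [casimirEigenvalue, casimir_double_sum m (fun i => (e i : ℝ))]
  field_simp
  ring

/-- For every `q ∈ Q`, `q ≠ 0`, and every `δ ∈ ℝ`, one has
`α(D;n,δ) − α(D−q;n,δ) = |q|·(R(q) − δ)`; in particular this affine function of `δ`
(of slope `−|q|`) vanishes exactly at `δ = R(q)`. -/
theorem casimir_eigenvalue_difference (m : ℕ) (hm : 2 ≤ m) (n : ℤ) (d : ℕ → ℕ)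
    (hd_anti : ∀ i, 1 ≤ i → i < m → d (i + 1) ≤ d i)
    (hdm : d m = 0) (hdm1 : d (m + 1) = 0)
    (q : ℕ → ℕ) (hq : ∀ i, 1 ≤ i → i ≤ m → q i ≤ d i - d (i + 1))
    (hq0 : ∃ i ∈ Finset.Icc 1 m, q i ≠ 0) (δ : ℝ) :
    casimirEigenvalue m n d δ - casimirEigenvalue m n (fun i => d i - q i) δ =
      (∑ i ∈ Finset.Icc 1 m, (q i : ℝ)) * (resonance m n d q - δ) ∧
    (casimirEigenvalue m n d δ - casimirEigenvalue m n (fun i => d i - q i) δ = 0 ↔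
      δ = resonance m n d q) := by
  have hQ : (∑ i ∈ Finset.Icc 1 m, (q i : ℝ)) ≠ 0 := by
    obtain ⟨i, hi, hne⟩ := hq0
    have : 0 < ∑ i ∈ Finset.Icc 1 m, (q i : ℝ) :=
      Finset.sum_pos' (fun _ _ => Nat.cast_nonneg _)
        ⟨i, hi, by exact_mod_cast Nat.pos_of_ne_zero hne⟩
    exact this.ne'
  have hm1 : (m : ℝ) + 1 ≠ 0 := by positivity
  -- `R(q)` sums `d` only up to `m - 1`, which is harmless because `d m = 0`.
  have hD : ∑ i ∈ Finset.Icc 1 (m - 1), (d i : ℝ) = ∑ i ∈ Finset.Icc 1 m, (d i : ℝ) := by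
    obtain ⟨k, rfl⟩ : ∃ k, m = k + 1 := ⟨m - 1, by omega⟩
    rw [Finset.sum_Icc_succ_top (by omega), hdm]
    simp
  have cast : ∀ i ∈ Finset.Icc 1 m, ((d i - q i : ℕ) : ℝ) = (d i : ℝ) - q i := by
    intro i hi
    rw [Finset.mem_Icc] at hi
    exact Nat.cast_sub ((hq i hi.1 hi.2).trans (Nat.sub_le _ _))
  have h1 : ∑ i ∈ Finset.Icc 1 m, ((d i - q i : ℕ) : ℝ) =
      ∑ i ∈ Finset.Icc 1 m, (d i : ℝ) - ∑ i ∈ Finset.Icc 1 m, (q i : ℝ) := by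
    rw [Finset.sum_congr rfl cast, Finset.sum_sub_distrib]
  -- The sum in the numerator of `R(q)` is the drop in `∑ eᵢ² - 2 ∑ i eᵢ` from `D` to `D - q`.
  have h2 : ∑ i ∈ Finset.Icc 1 m,
        (2 * (d i : ℝ) * (q i : ℝ) - (q i : ℝ) ^ 2 - 2 * (i : ℝ) * (q i : ℝ)) =
      (∑ i ∈ Finset.Icc 1 m, (d i : ℝ) ^ 2 - 2 * ∑ i ∈ Finset.Icc 1 m, (i : ℝ) * (d i : ℝ)) -
        (∑ i ∈ Finset.Icc 1 m, ((d i - q i : ℕ) : ℝ) ^ 2 -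
          2 * ∑ i ∈ Finset.Icc 1 m, (i : ℝ) * ((d i - q i : ℕ) : ℝ)) := by
    rw [Finset.mul_sum, Finset.mul_sum, ← Finset.sum_sub_distrib, ← Finset.sum_sub_distrib,
      ← Finset.sum_sub_distrib]
    refine Finset.sum_congr rfl fun i hi => ?_
    rw [cast i hi]
    ring
  have key : casimirEigenvalue m n d δ - casimirEigenvalue m n (fun i => d i - q i) δ =
      (∑ i ∈ Finset.Icc 1 m, (q i : ℝ)) * (resonance m n d q - δ) := by
    rw [casimirEigenvalue_eq m (by omega), casimirEigenvalue_eq m (by omega), resonance, hD, h2,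
      h1]
    field_simp
    ring
  refine ⟨key, ?_⟩
  rw [key, mul_eq_zero, or_iff_right hQ, sub_eq_zero, eq_comm]
end

section
/- For m ≥ 2, the linear span, inside the Lie algebra of smooth vector fields on ℝ^m, of the vector fields x ↦ u (for u ∈ ℝ^m constant), x ↦ Ax (for A ∈ gl(m,ℝ)), and x ↦ ξ(x)·x (for ξ a linear form on ℝ^m) — i.e. the span of the fields ∂_i, x^j∂_i and x^j x^i ∂_i (1 ≤ i,j ≤ m, sum over i in the last expression) — is a Lie subalgebra, and this Lie subalgebra is isomorphic as a real Lie algebra to sl(m+1,ℝ). -/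
/-!
The algebra is the infinitesimal projective action of `gl(m+1)` on `ℝ^m`, seen in the affine chart
`x ↦ h = (1, x)` of projective space. A matrix `M` induces the field
`projField M : x ↦ (M h)₀ x - (M h)₊`, where `₊` drops the zeroth coordinate; the sign is chosen so
that `M ↦ projField M` is a homomorphism, rather than an antihomomorphism, for the bracket
`DY·X - DX·Y` (`vfBracket_projField`). The key identity is `(0, projField N x) = (N h)₀ h - N h`:
inserting it in the derivative of `projField M` leaves a part symmetric in `M` and `N`, which
cancels in the bracket, and the terms in `M N h`.

The image of `gl(m+1)` is the span `projectiveAlgebra m` (`range_projField`): the first column, the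
lower right block and the first row of `M` give the constant, linear and quadratic fields. The
kernel consists of scalar matrices (`projField_eq_zero`), and scalar matrices act trivially
(`projField_one`). Hence the restriction to traceless matrices is bijective onto
`projectiveAlgebra m`.
-/

/-- The Lie bracket of vector fields on `ℝ^m`, identified with smooth maps
`ℝ^m → ℝ^m`: `[X,Y](x) = DY(x)·X(x) − DX(x)·Y(x)`. -/
noncomputable def vfBracket (m : ℕ) (X Y : (Fin m → ℝ) → Fin m → ℝ) :
    (Fin m → ℝ) → Fin m → ℝ :=
  fun x => fderiv ℝ Y x (X x) - fderiv ℝ X x (Y x)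

/-- The linear span of the vector fields `x ↦ u` (`u ∈ ℝ^m`), `x ↦ Ax`
(`A ∈ gl(m,ℝ)`) and `x ↦ ξ(x)·x` (`ξ` a linear form on `ℝ^m`), i.e. the span of
the fields `∂_i`, `x^j ∂_i` and `x^j x^i ∂_i`. -/
def projectiveAlgebra (m : ℕ) : Submodule ℝ ((Fin m → ℝ) → Fin m → ℝ) :=
  Submodule.span ℝ
    ({X | ∃ u : Fin m → ℝ, X = fun _ => u} ∪
      {X | ∃ A : Matrix (Fin m) (Fin m) ℝ, X = fun x => A.mulVec x} ∪
      {X | ∃ ξ : (Fin m → ℝ) →ₗ[ℝ] ℝ, X = fun x => ξ x • x})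

/-- The point `(1, x)` of `ℝ^(m+1)`, i.e. homogeneous coordinates of `x`. -/
def homCoord (m : ℕ) (x : Fin m → ℝ) : Fin (m + 1) → ℝ := Fin.cons 1 x

/-- The vector field on `ℝ^m` induced by a matrix acting on homogeneous coordinates, with the sign
that makes it compatible with the brackets: `x ↦ (M h)₀ x - (M h)₊` with `h = (1, x)`. -/
def projField (m : ℕ) :
    Matrix (Fin (m + 1)) (Fin (m + 1)) ℝ →ₗ[ℝ] ((Fin m → ℝ) → Fin m → ℝ) where
  toFun M x i := M.mulVec (homCoord m x) 0 * x i - M.mulVec (homCoord m x) i.succ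
  map_add' M N := by
    ext x i
    simp only [Matrix.add_mulVec, Pi.add_apply]
    ring
  map_smul' c M := by
    ext x i
    simp only [Matrix.smul_mulVec, Pi.smul_apply, smul_eq_mul, RingHom.id_apply]
    ring

theorem projField_apply (m : ℕ) (M : Matrix (Fin (m + 1)) (Fin (m + 1)) ℝ) (x : Fin m → ℝ)
    (i : Fin m) : projField m M x i =
      M.mulVec (homCoord m x) 0 * x i - M.mulVec (homCoord m x) i.succ := rfl

theorem mulVec_homCoord (m : ℕ) (M : Matrix (Fin (m + 1)) (Fin (m + 1)) ℝ) (x : Fin m → ℝ)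
    (k : Fin (m + 1)) :
    M.mulVec (homCoord m x) k = M k 0 + ∑ j : Fin m, M k j.succ * x j := by
  simp [Matrix.mulVec, dotProduct, Fin.sum_univ_succ, homCoord]

theorem mulVec_cons_zero (m : ℕ) (M : Matrix (Fin (m + 1)) (Fin (m + 1)) ℝ) (v : Fin m → ℝ)
    (k : Fin (m + 1)) :
    M.mulVec (Fin.cons 0 v : Fin (m + 1) → ℝ) k = ∑ j : Fin m, M k j.succ * v j := by
  simp [Matrix.mulVec, dotProduct, Fin.sum_univ_succ]

theorem hasFDerivAt_mulVec_homCoord (m : ℕ) (M : Matrix (Fin (m + 1)) (Fin (m + 1)) ℝ)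
    (x : Fin m → ℝ) (k : Fin (m + 1)) :
    HasFDerivAt (fun y => M.mulVec (homCoord m y) k)
      (∑ j : Fin m, M k j.succ • (ContinuousLinearMap.proj j : (Fin m → ℝ) →L[ℝ] ℝ)) x := by
  simp only [mulVec_homCoord]
  refine HasFDerivAt.const_add _ (HasFDerivAt.fun_sum fun j _ => ?_)
  exact (hasFDerivAt_apply (𝕜 := ℝ) j x).const_mul _

theorem fderiv_projField (m : ℕ) (M : Matrix (Fin (m + 1)) (Fin (m + 1)) ℝ)
    (x v : Fin m → ℝ) (i : Fin m) :
    fderiv ℝ (projField m M) x v i =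
      M.mulVec (homCoord m x) 0 * v i
        + M.mulVec (Fin.cons 0 v : Fin (m + 1) → ℝ) 0 * x i
        - M.mulVec (Fin.cons 0 v : Fin (m + 1) → ℝ) i.succ := by
  have h : HasFDerivAt (projField m M) _ x := hasFDerivAt_pi.2 fun i =>
    ((hasFDerivAt_mulVec_homCoord m M x 0).mul (hasFDerivAt_apply (𝕜 := ℝ) i x)).sub
      (hasFDerivAt_mulVec_homCoord m M x i.succ)
  rw [h.fderiv]
  simp [mulVec_cons_zero]
  ring

/-- The field `projField N`, lifted to homogeneous coordinates as a vector tangent to the affine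
chart, differs from `-N h` by a multiple of `h`. -/
theorem cons_zero_projField (m : ℕ) (N : Matrix (Fin (m + 1)) (Fin (m + 1)) ℝ) (x : Fin m → ℝ) :
    (Fin.cons 0 (projField m N x) : Fin (m + 1) → ℝ) =
      N.mulVec (homCoord m x) 0 • homCoord m x - N.mulVec (homCoord m x) := by
  ext k
  refine Fin.cases ?_ (fun i => ?_) k
  · simp [homCoord]
  · simp [projField_apply, homCoord]

theorem vfBracket_projField (m : ℕ) (M N : Matrix (Fin (m + 1)) (Fin (m + 1)) ℝ) :
    vfBracket m (projField m M) (projField m N) = projField m ⁅M, N⁆ := by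
  ext x i
  simp only [vfBracket, Pi.sub_apply, fderiv_projField, cons_zero_projField, Matrix.mulVec_sub,
    Matrix.mulVec_smul, Matrix.mulVec_mulVec, Pi.smul_apply, smul_eq_mul, projField_apply,
    Ring.lie_def, Matrix.sub_mulVec]
  ring

theorem projField_one (m : ℕ) : projField m 1 = 0 := by
  ext x i
  simp [projField_apply, homCoord]

/-- Evaluating at `0` and `± e_j` shows that a matrix inducing the zero field is scalar. -/
theorem projField_eq_zero (m : ℕ) (M : Matrix (Fin (m + 1)) (Fin (m + 1)) ℝ)
    (hM : projField m M = 0) : M = M 0 0 • (1 : Matrix (Fin (m + 1)) (Fin (m + 1)) ℝ) := by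
  have h0 (i : Fin m) : M i.succ 0 = 0 := by
    have := congrFun (congrFun hM 0) i
    simpa [projField_apply, mulVec_homCoord] using this
  have hs (c : ℝ) (i j : Fin m) :
      (M 0 0 + M 0 j.succ * c) * (Pi.single j c : Fin m → ℝ) i - M i.succ j.succ * c = 0 := by
    have := congrFun (congrFun hM (Pi.single j c)) i
    simpa [projField_apply, mulVec_homCoord, h0, Pi.single_apply] using this
  ext a b
  refine Fin.cases ?_ (fun i => ?_) a <;> refine Fin.cases ?_ (fun j => ?_) b
  · simp
  · have h1 := hs 1 j j
    have h2 := hs (-1) j j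
    simp only [Pi.single_eq_same] at h1 h2
    have h3 : (0 : Fin (m + 1)) ≠ j.succ := (Fin.succ_ne_zero j).symm
    simp only [Matrix.smul_apply, Matrix.one_apply_ne h3, smul_zero]
    linarith
  · simp [h0]
  · have h1 := hs 1 i j
    have h2 := hs (-1) i j
    by_cases hij : i = j
    · subst hij
      simp only [Pi.single_eq_same] at h1 h2
      simp
      linarith
    · have h3 : i.succ ≠ j.succ := fun h => hij (Fin.succ_injective _ h)
      simp only [Pi.single_eq_of_ne hij] at h1
      simp only [Matrix.smul_apply, Matrix.one_apply_ne h3, smul_zero]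
      linarith

theorem projField_mem (m : ℕ) (M : Matrix (Fin (m + 1)) (Fin (m + 1)) ℝ) :
    projField m M ∈ projectiveAlgebra m := by
  have h : projField m M = (fun _ => fun i => - M i.succ 0)
      + (fun x => (Matrix.of fun i j : Fin m =>
          (if i = j then M 0 0 else 0) - M i.succ j.succ).mulVec x)
      + (fun x => (∑ j : Fin m, M 0 j.succ • (LinearMap.proj j : (Fin m → ℝ) →ₗ[ℝ] ℝ)) x • x) := by
    ext x i
    simp only [projField_apply, mulVec_homCoord]
    simp [Matrix.mulVec, dotProduct, sub_mul, Finset.sum_sub_distrib]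
    ring
  rw [h]
  refine add_mem (add_mem ?_ ?_) ?_ <;> apply Submodule.subset_span
  · exact Or.inl (Or.inl ⟨_, rfl⟩)
  · exact Or.inl (Or.inr ⟨_, rfl⟩)
  · exact Or.inr ⟨_, rfl⟩

theorem range_projField (m : ℕ) : LinearMap.range (projField m) = projectiveAlgebra m := by
  apply le_antisymm
  · rintro _ ⟨M, rfl⟩
    exact projField_mem m M
  · refine Submodule.span_le.2 ?_
    rintro X ((⟨u, rfl⟩ | ⟨A, rfl⟩) | ⟨ξ, rfl⟩)
    · refine ⟨Matrix.of (Fin.cons 0 fun i => Fin.cons (- u i) 0), ?_⟩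
      ext x i
      simp [projField_apply, mulVec_homCoord]
    · refine ⟨Matrix.of (Fin.cons 0 fun i => Fin.cons 0 fun j => - A i j), ?_⟩
      ext x i
      simp only [projField_apply, mulVec_homCoord]
      simp [Matrix.mulVec, dotProduct]
    · refine ⟨Matrix.of (Fin.cons (Fin.cons 0 fun j => ξ (Pi.single j 1)) 0), ?_⟩
      ext x i
      have hx : ξ x = ∑ j, ξ (Pi.single j 1) * x j := by
        rw [LinearMap.pi_apply_eq_sum_univ ξ x]
        refine Finset.sum_congr rfl fun j _ => ?_
        rw [smul_eq_mul, mul_comm]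
        congr 2
        ext k
        simp [Pi.single_apply, eq_comm]
      simp [projField_apply, mulVec_homCoord, hx]

theorem mem_sl_iff (m : ℕ) (M : Matrix (Fin (m + 1)) (Fin (m + 1)) ℝ) :
    M ∈ LieAlgebra.SpecialLinear.sl (Fin (m + 1)) ℝ ↔ M.trace = 0 := Iff.rfl

/-- The restriction of `projField` to traceless matrices, with values in the projective algebra. -/
def slToProj (m : ℕ) : LieAlgebra.SpecialLinear.sl (Fin (m + 1)) ℝ →ₗ[ℝ] projectiveAlgebra m where
  toFun M := ⟨projField m M.1, projField_mem m M.1⟩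
  map_add' M N := Subtype.ext ((projField m).map_add M.1 N.1)
  map_smul' c M := Subtype.ext ((projField m).map_smul c M.1)

theorem slToProj_bijective (m : ℕ) : Function.Bijective (slToProj m) := by
  constructor
  · rw [injective_iff_map_eq_zero]
    rintro ⟨M, hM⟩ h
    have h1 := projField_eq_zero m M (congrArg Subtype.val h)
    rw [mem_sl_iff, h1, Matrix.trace_smul, Matrix.trace_one, smul_eq_mul, Fintype.card_fin] at hM
    have h2 : M 0 0 = 0 := (mul_eq_zero.1 hM).resolve_right (by positivity)
    rw [h2, zero_smul] at h1
    exact Subtype.ext h1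
  · rintro ⟨X, hX⟩
    obtain ⟨M, rfl⟩ := (range_projField m).ge hX
    -- Subtracting a scalar matrix does not change the field and makes the trace vanish.
    refine ⟨⟨M - (M.trace / (m + 1)) • 1, ?_⟩, Subtype.ext ?_⟩
    · have h : (m : ℝ) + 1 ≠ 0 := by positivity
      rw [mem_sl_iff, Matrix.trace_sub, Matrix.trace_smul, Matrix.trace_one, smul_eq_mul,
        Fintype.card_fin]
      push_cast
      field_simp
      ring
    · change projField m (M - (M.trace / (m + 1)) • 1) = projField m M
      rw [map_sub, map_smul, projField_one, smul_zero, sub_zero]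

/-- The span of the fields `∂_i`, `x^j ∂_i`, `x^j x^i ∂_i` is a Lie subalgebra of the
vector fields on `ℝ^m`, isomorphic as a real Lie algebra to `sl(m+1,ℝ)`. -/
theorem projectiveAlgebra_isomorphic_sl (m : ℕ) (hm : 2 ≤ m) :
    (∀ X ∈ projectiveAlgebra m, ∀ Y ∈ projectiveAlgebra m,
        vfBracket m X Y ∈ projectiveAlgebra m) ∧
    ∃ e : projectiveAlgebra m ≃ₗ[ℝ] LieAlgebra.SpecialLinear.sl (Fin (m + 1)) ℝ,
      ∀ (X Y : (Fin m → ℝ) → Fin m → ℝ) (hX : X ∈ projectiveAlgebra m)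
        (hY : Y ∈ projectiveAlgebra m) (hB : vfBracket m X Y ∈ projectiveAlgebra m),
        e ⟨vfBracket m X Y, hB⟩ = ⁅e ⟨X, hX⟩, e ⟨Y, hY⟩⁆ := by
  refine ⟨fun X hX Y hY => ?_,
    (LinearEquiv.ofBijective (slToProj m) (slToProj_bijective m)).symm, fun X Y hX hY hB => ?_⟩
  · obtain ⟨M, rfl⟩ := (range_projField m).ge hX
    obtain ⟨N, rfl⟩ := (range_projField m).ge hY
    rw [vfBracket_projField]
    exact projField_mem m _
  · obtain ⟨M, hM⟩ := (slToProj_bijective m).2 ⟨X, hX⟩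
    obtain ⟨N, hN⟩ := (slToProj_bijective m).2 ⟨Y, hY⟩
    have hMN : slToProj m ⁅M, N⁆ = ⟨vfBracket m X Y, hB⟩ := by
      refine Subtype.ext ?_
      obtain rfl : projField m M.1 = X := congrArg Subtype.val hM
      obtain rfl : projField m N.1 = Y := congrArg Subtype.val hN
      exact (vfBracket_projField m M.1 N.1).symm
    have key (P : LieAlgebra.SpecialLinear.sl (Fin (m + 1)) ℝ) :
        (LinearEquiv.ofBijective (slToProj m) (slToProj_bijective m)).symm (slToProj m P) = P :=
      LinearEquiv.symm_apply_apply _ P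
    rw [← hMN, ← hM, ← hN, key, key, key]
end

section
/- For every f ∈ W_0 there exists a unique g ∈ W such that C g = α(0)·g and π_0 g = f. Moreover, if g ∈ W is an eigenvector of C whose component π_0 g is nonzero, then its eigenvalue is necessarily α(0). -/
open Finset

/-!
Taking components, `C g = α z • g` says `(α z - α q) • π q g = π q (N g)` for every `q`.
At `q = z` this is vacuous, because nothing has degree one less than `w z = 0` and so
`π z ∘ N = 0`; at `q ≠ z` one may divide by `α z - α q`. With
`T = Σ_q (α z - α q)⁻¹ • π q ∘ N`, the two conditions on `g` thus amount to `(1 - T) g = f`.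
As `T` raises the degree and the degrees are bounded, `T` is nilpotent and `1 - T` is
invertible, which gives existence and uniqueness. The claim on eigenvalues is the component
of the eigenvector equation at `z`.
-/

/-- Linear-algebraic core of the lift of symbols: `W` is the internal direct sum of
subspaces `Wsub q` (`q ∈ Q` finite, distinguished element `z`, degree `w` vanishing
exactly at `z`) with projections `π q`; `C = Σ_q α(q)·π_q + N` where `α(q) ≠ α(z)`
for `q ≠ z` and `N` raises the degree by exactly one.  Then every `f ∈ Wsub z` admits
a unique `g` with `C g = α(z)·g` and `π z g = f`; and any eigenvector of `C` with
nonzero component in `Wsub z` has eigenvalue `α(z)`. -/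
theorem casimir_lift_unique {K : Type*} [Field K] {W : Type*} [AddCommGroup W]
    [Module K W] {Q : Type*} [Fintype Q] [DecidableEq Q] (z : Q) (w : Q → ℕ)
    (hw : ∀ q, w q = 0 ↔ q = z)
    (Wsub : Q → Submodule K W) (π : Q → W →ₗ[K] W)
    (hmem : ∀ q x, π q x ∈ Wsub q)
    (hsum : ∀ x : W, ∑ q, π q x = x)
    (hproj : ∀ q q' : Q, ∀ x ∈ Wsub q', π q x = if q = q' then x else 0)
    (α : Q → K) (hα : ∀ q, q ≠ z → α q ≠ α z)
    (N : W →ₗ[K] W)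
    (hN : ∀ q : Q, ∀ x ∈ Wsub q, N x ∈ ⨆ q' ∈ {p : Q | w p = w q + 1}, Wsub q') :
    (∀ f ∈ Wsub z, ∃! g : W,
        (∑ q, α q • π q + N) g = α z • g ∧ π z g = f) ∧
    (∀ (g : W) (μ : K), (∑ q, α q • π q + N) g = μ • g → π z g ≠ 0 → μ = α z) := by
  have hpp : ∀ q p x, π q (π p x) = if q = p then π p x else 0 :=
    fun q p x => hproj q p _ (hmem p x)
  have hext : ∀ x y : W, (∀ q, π q x = π q y) → x = y := by
    intro x y h
    rw [← hsum x, ← hsum y]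
    exact Finset.sum_congr rfl fun q _ => h q
  have hNpp : ∀ q p x, w q ≠ w p + 1 → π q (N (π p x)) = 0 := by
    intro q p x hne
    have hle : (⨆ q' ∈ {r : Q | w r = w p + 1}, Wsub q') ≤ LinearMap.ker (π q) := by
      refine iSup₂_le fun r hr y hy => ?_
      have hqr : q ≠ r := by
        rintro rfl
        exact hne hr
      simp [hproj q r y hy, hqr]
    exact hle (hN p _ (hmem p x))
  have hNexp : ∀ q x, π q (N x) = ∑ p, π q (N (π p x)) := by
    intro q x
    conv_lhs => rw [← hsum x]
    simp only [map_sum]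
  have hzN : ∀ x, π z (N x) = 0 := by
    intro x
    rw [hNexp]
    refine Finset.sum_eq_zero fun p _ => hNpp _ _ _ ?_
    have := (hw z).2 rfl
    omega
  have hC : ∀ q g, π q ((∑ q, α q • π q + N) g) = α q • π q g + π q (N g) := by
    intro q g
    simp [hpp, LinearMap.sum_apply]
  -- The coefficient at `q = z` is `0⁻¹ = 0`, which does no harm since `π z ∘ N = 0`.
  let T : Module.End K W := ∑ q, (α z - α q)⁻¹ • (π q ∘ₗ N)
  have hT : ∀ q g, π q (T g) = (α z - α q)⁻¹ • π q (N g) := by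
    intro q g
    simp [T, hpp, LinearMap.sum_apply]
  have hTpow : ∀ (n : ℕ) (x : W) (q : Q), w q < n → π q ((T ^ n) x) = 0 := by
    intro n
    induction n with
    | zero => intro x q h; omega
    | succ n ih =>
      intro x q h
      rw [pow_succ', Module.End.mul_apply, hT, hNexp]
      refine smul_eq_zero_of_right _ (Finset.sum_eq_zero fun p _ => ?_)
      by_cases hp : w p < n
      · rw [ih x p hp, map_zero, map_zero]
      · exact hNpp _ _ _ (by omega)
  have hnil : IsNilpotent T := by
    refine ⟨(∑ q, w q) + 1, LinearMap.ext fun x => hext _ _ fun q => ?_⟩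
    rw [hTpow _ x q (Nat.lt_succ_of_le
      (Finset.single_le_sum (fun _ _ => Nat.zero_le _) (Finset.mem_univ q)))]
    simp
  have hbij : Function.Bijective (1 - T : Module.End K W) :=
    (Module.End.isUnit_iff _).1 hnil.isUnit_one_sub
  have key : ∀ f ∈ Wsub z, ∀ g : W,
      ((∑ q, α q • π q + N) g = α z • g ∧ π z g = f) ↔ (1 - T : Module.End K W) g = f := by
    intro f hf g
    rw [LinearMap.sub_apply, Module.End.one_apply]
    constructor
    · rintro ⟨h1, h2⟩
      refine hext _ _ fun q => ?_
      rw [map_sub, hT, hproj q z f hf]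
      by_cases hq : q = z
      · subst hq
        simp [h2]
      · have h3 := congrArg (π q) h1
        rw [hC, map_smul] at h3
        have h4 : π q (N g) = (α z - α q) • π q g := by
          rw [sub_smul, ← h3]; abel
        rw [h4, inv_smul_smul₀ (sub_ne_zero.2 (hα q hq).symm), if_neg hq, sub_self]
    · intro h
      have h3 : ∀ q, π q g - (α z - α q)⁻¹ • π q (N g) = if q = z then f else 0 := by
        intro q
        rw [← hT, ← map_sub, h, hproj q z f hf]
      refine ⟨hext _ _ fun q => ?_, by simpa using h3 z⟩
      rw [hC, map_smul]
      by_cases hq : q = z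
      · subst hq
        rw [hzN, add_zero]
      · have h4 := h3 q
        rw [if_neg hq, sub_eq_zero, eq_inv_smul_iff₀ (sub_ne_zero.2 (hα q hq).symm)] at h4
        rw [← h4, sub_smul]; abel
  refine ⟨fun f hf => ?_, fun g μ h hne => ?_⟩
  · simp only [key f hf]
    exact hbij.existsUnique f
  · have h1 := congrArg (π z) h
    rw [hC, hzN, add_zero, map_smul] at h1
    exact (smul_left_injective K hne h1).symm
end
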